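/- Let G be a finite group whose power graph contains an induced 4-cycle (four pairwise distinct vertices a, b, c, d with a–b, b–c, c–d, d–a adjacent and a–c, b–d non-adjacent). Then the power graph of G contains an induced 4-cycle a', b', c', d' in which both a' and c' have prime order and a' ∈ ⟨b'⟩ ∩ ⟨d'⟩ and c' ∈ ⟨b'⟩ ∩ ⟨d'⟩ (i.e., a power-reduced induced 4-cycle whose in-vertices have prime order). -/

import Mathlib

/-- The power graph of a group: distinct `x` and `y` are adjacent iff one is a power
of the other. -/
def powerGraph (G : Type*) [Group G] : SimpleGraph G :=
  SimpleGraph.fromRel (fun x y => x ∈ Subgroup.zpowers y)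

/-- Four pairwise distinct vertices forming an induced 4-cycle in the power graph. -/
def IsInducedFourCycle {G : Type*} [Group G] (a b c d : G) : Prop :=
  a ≠ b ∧ a ≠ c ∧ a ≠ d ∧ b ≠ c ∧ b ≠ d ∧ c ≠ d ∧
    (powerGraph G).Adj a b ∧ (powerGraph G).Adj b c ∧ (powerGraph G).Adj c d ∧
    (powerGraph G).Adj d a ∧ ¬ (powerGraph G).Adj a c ∧ ¬ (powerGraph G).Adj b d

theorem aux_mem {G : Type*} [Group G] [Finite G] {a b c : G}
    (ha : a ∈ Subgroup.zpowers b) (hc : c ∈ Subgroup.zpowers b)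
    (h : orderOf a ∣ orderOf c) : a ∈ Subgroup.zpowers c := by
  rw [← mem_powers_iff_mem_zpowers] at ha hc
  obtain ⟨i, rfl⟩ := ha
  obtain ⟨j, rfl⟩ := hc
  simp only at h ⊢
  have hN : 0 < orderOf b := orderOf_pos b
  have hg0 : 0 < Nat.gcd (orderOf b) j := Nat.gcd_pos_of_pos_left _ hN
  have h1 : (b ^ i) ^ orderOf (b ^ j) = 1 := orderOf_dvd_iff_pow_eq_one.mp h
  rw [← pow_mul, ← orderOf_dvd_iff_pow_eq_one, orderOf_pow] at h1
  obtain ⟨N', hN'⟩ := Nat.gcd_dvd_left (orderOf b) j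
  have h2 : orderOf b / Nat.gcd (orderOf b) j = N' :=
    Nat.div_eq_of_eq_mul_right hg0 hN'
  have hN'0 : 0 < N' := by
    rcases Nat.eq_zero_or_pos N' with h0 | h0
    · rw [h0] at hN'; omega
    · exact h0
  rw [h2] at h1
  have h3 : Nat.gcd (orderOf b) j * N' ∣ i * N' := hN' ▸ h1
  obtain ⟨t, ht⟩ := Nat.dvd_of_mul_dvd_mul_right hN'0 h3
  have h4 : b ^ (Nat.gcd (orderOf b) j) ∈ Subgroup.zpowers (b ^ j) := by
    refine ⟨Nat.gcdB (orderOf b) j, ?_⟩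
    have := Nat.gcd_eq_gcd_ab (orderOf b) j
    simp only
    rw [← zpow_natCast b (Nat.gcd _ _), this, zpow_add, zpow_mul, zpow_mul]
    simp [pow_orderOf_eq_one]
  rw [ht, pow_mul]
  exact Subgroup.pow_mem _ h4 _

theorem aux_pp {m n : ℕ} (h : ¬ m ∣ n) : ∃ p k, p.Prime ∧ p ^ k ∣ m ∧ ¬ p ^ k ∣ n := by
  rw [Nat.dvd_iff_prime_pow_dvd_dvd] at h
  push Not at h
  obtain ⟨p, k, hp, h1, h2⟩ := h
  exact ⟨p, k, hp, h1, h2⟩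

theorem aux_p {p m n k : ℕ} (h1 : p ^ k ∣ m) (h2 : ¬ p ^ k ∣ n) : p ∣ m := by
  rcases k with _ | k
  · simp at h2
  · exact (dvd_pow_self p (Nat.succ_ne_zero k)).trans h1

theorem aux_main {G : Type*} [Group G] [Finite G] {a b c d : G}
    (hab : a ∈ Subgroup.zpowers b) (had : a ∈ Subgroup.zpowers d)
    (hcb : c ∈ Subgroup.zpowers b) (hcd : c ∈ Subgroup.zpowers d)
    (hac : a ∉ Subgroup.zpowers c) (hca : c ∉ Subgroup.zpowers a)
    (hbd : b ≠ d) (hn : ¬ (powerGraph G).Adj b d) :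
    ∃ a' b' c' d' : G, IsInducedFourCycle a' b' c' d' ∧
      (orderOf a').Prime ∧ (orderOf c').Prime ∧
      a' ∈ Subgroup.zpowers b' ⊓ Subgroup.zpowers d' ∧
      c' ∈ Subgroup.zpowers b' ⊓ Subgroup.zpowers d' := by
  obtain ⟨p, k, hp, hk1, hk2⟩ := aux_pp (fun h => hac (aux_mem hab hcb h))
  obtain ⟨q, l, hq, hl1, hl2⟩ := aux_pp (fun h => hca (aux_mem hcb hab h))
  have hpq : p ≠ q := by
    rintro rfl
    rcases le_total k l with h | h
    · exact hk2 ((pow_dvd_pow p h).trans hl1)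
    · exact hl2 ((pow_dvd_pow p h).trans hk1)
  have hpa := aux_p hk1 hk2
  have hqc := aux_p hl1 hl2
  have hoa := orderOf_pow_orderOf_div (orderOf_pos a).ne' hpa
  have hoc := orderOf_pow_orderOf_div (orderOf_pos c).ne' hqc
  have hab' := Subgroup.pow_mem _ hab (orderOf a / p)
  have had' := Subgroup.pow_mem _ had (orderOf a / p)
  have hcb' := Subgroup.pow_mem _ hcb (orderOf c / q)
  have hcd' := Subgroup.pow_mem _ hcd (orderOf c / q)
  generalize a ^ (orderOf a / p) = x at *
  generalize c ^ (orderOf c / q) = y at *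
  have key : ∀ {u v w : G}, (orderOf u).Prime → (orderOf v).Prime → orderOf u ≠ orderOf v →
      v ∈ Subgroup.zpowers w → u ≠ w := by
    rintro u v w h1 h2 h3 h4 rfl
    exact h3 ((Nat.prime_dvd_prime_iff_eq h2 h1).mp (orderOf_dvd_of_mem_zpowers h4)).symm
  have hx : (orderOf x).Prime := hoa ▸ hp
  have hy : (orderOf y).Prime := hoc ▸ hq
  have hxy : orderOf x ≠ orderOf y := by rw [hoa, hoc]; exact hpq
  have e1 := key hx hy hxy hcb'
  have e2 := key hx hy hxy hcd'
  have e3 := key hy hx hxy.symm hab'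
  have e4 := key hy hx hxy.symm had'
  refine ⟨x, b, y, d, ⟨e1, fun h => hxy (h ▸ rfl), e2, e3.symm, hbd, e4, ?_, ?_, ?_, ?_, ?_, hn⟩,
    hx, hy, ⟨hab', had'⟩, ⟨hcb', hcd'⟩⟩
  · exact ⟨e1, Or.inl hab'⟩
  · exact ⟨e3.symm, Or.inr hcb'⟩
  · exact ⟨e4, Or.inl hcd'⟩
  · exact ⟨e2.symm, Or.inr had'⟩
  · rintro ⟨-, h | h⟩
    · exact hxy ((Nat.prime_dvd_prime_iff_eq hx hy).mp (orderOf_dvd_of_mem_zpowers h))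
    · exact hxy ((Nat.prime_dvd_prime_iff_eq hy hx).mp (orderOf_dvd_of_mem_zpowers h)).symm

theorem stmt19 (G : Type*) [Group G] [Fintype G]
    (h : ∃ a b c d : G, IsInducedFourCycle a b c d) :
    ∃ a' b' c' d' : G, IsInducedFourCycle a' b' c' d' ∧
      (orderOf a').Prime ∧ (orderOf c').Prime ∧
      a' ∈ Subgroup.zpowers b' ⊓ Subgroup.zpowers d' ∧
      c' ∈ Subgroup.zpowers b' ⊓ Subgroup.zpowers d' := by
  obtain ⟨a, b, c, d, -, nac, -, -, nbd, -, ⟨-, hab⟩, ⟨-, hbc⟩, ⟨-, hcd⟩, ⟨-, hda⟩, hac, hbd⟩ := h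
  have tr : ∀ {x y z : G}, x ∈ Subgroup.zpowers y → y ∈ Subgroup.zpowers z →
      x ∈ Subgroup.zpowers z := fun h1 h2 => Subgroup.zpowers_le.mpr h2 h1
  have h1 : a ∉ Subgroup.zpowers c := fun h => hac ⟨nac, Or.inl h⟩
  have h2 : c ∉ Subgroup.zpowers a := fun h => hac ⟨nac, Or.inr h⟩
  have h3 : b ∉ Subgroup.zpowers d := fun h => hbd ⟨nbd, Or.inl h⟩
  have h4 : d ∉ Subgroup.zpowers b := fun h => hbd ⟨nbd, Or.inr h⟩
  rcases hab with hab | hab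
  · have hcb := hbc.resolve_left fun h => h1 (tr hab h)
    have hcd := hcd.resolve_right fun h => h4 (tr h hcb)
    have had := hda.resolve_left fun h => h2 (tr hcd h)
    exact aux_main hab had hcb hcd h1 h2 nbd hbd
  · have hda := hda.resolve_right fun h => h3 (tr hab h)
    have hdc := hcd.resolve_left fun h => h2 (tr h hda)
    have hbc := hbc.resolve_right fun h => h4 (tr hdc h)
    exact aux_main hab hbc hda hdc h3 h4 nac hac
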